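/- arXiv:2510.00616 — 9 statements merged into one kernel-verified Lean document; each statement's English description precedes it below -/
import Mathlib

section
/- For all nonnegative integers n₁, n₂, n₃, the following identity of binomial coefficients holds: C(2n₁+n₂+2n₃+1, 2n₃) + C(n₂+2n₃, 2n₃) = Σ_{n₄=0}^{n₃} [C(n₁+n₂+n₃+n₄+1, 2n₄) + C(n₁+n₂+n₃+n₄, 2n₄)] · C(n₁+n₃−n₄, 2(n₃−n₄)), where C(a,b) denotes the ordinary binomial coefficient of nonnegative integers (equal to 0 when b > a). -/
/-!
The Morgan-Voyce polynomials `b n = ∑ k, C(n + k, 2k) X ^ k` satisfy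
`b (n + 2) + b n = (X + 2) * b (n + 1)`. Writing `X + 2 = z + z⁻¹`, this gives
`b a = (z ^ (a + 1) + z ^ (-a)) / (z + 1)`, so that `(z + 1) * z ^ a * b a = z ^ (2 * a + 1) + 1`.
Reading `z` as the shift of a sequence `u` with the same recurrence yields
`(u (m + a + 1) + u (m + a)) * b a = u (m + 2 * a + 1) + u m`, and the binomial identity compares
coefficients in the case `u = b`.
-/

open Finset Polynomial

lemma choose_add_two_add_choose (n k : ℕ) :
    (n + 2).choose (k + 2) + n.choose (k + 2) = n.choose k + 2 * (n + 1).choose (k + 2) := by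
  simp only [Nat.choose_succ_succ']
  ring

/-- The Morgan-Voyce polynomial `∑ k, C(n + k, 2k) X ^ k` of the first kind, whose products have
binomial convolutions as coefficients. -/
noncomputable def morganVoyce (R : Type*) [Semiring R] (n : ℕ) : R[X] :=
  ∑ k ∈ range (n + 1), monomial k ((n + k).choose (2 * k) : R)

section Semiring

variable (R : Type*) [Semiring R]

lemma coeff_morganVoyce (n k : ℕ) :
    (morganVoyce R n).coeff k = ((n + k).choose (2 * k) : R) := by
  simp only [morganVoyce, finsetSum_coeff, coeff_monomial, sum_ite_eq', mem_range]
  split_ifs with hk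
  · rfl
  · rw [Nat.choose_eq_zero_of_lt (by lia), Nat.cast_zero]

lemma morganVoyce_zero : morganVoyce R 0 = 1 := by
  simp [morganVoyce]

lemma morganVoyce_one : morganVoyce R 1 = X + 1 := by
  simp [morganVoyce, sum_range_succ, add_comm, monomial_one_one_eq_X]

lemma morganVoyce_add_two_add_self (n : ℕ) :
    morganVoyce R (n + 2) + morganVoyce R n = (X + 2) * morganVoyce R (n + 1) := by
  rw [add_mul, two_mul]
  ext k
  rcases k with _ | k
  · simp [coeff_morganVoyce]
  · simp only [coeff_add, coeff_X_mul, coeff_morganVoyce]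
    have second_difference := choose_add_two_add_choose (n + k + 1) (2 * k)
    norm_cast
    congr 1
    convert second_difference using 3 <;> lia

end Semiring

lemma add_mul_morganVoyce {R : Type*} [CommRing R] {u : ℕ → R[X]}
    (hu : ∀ n, u (n + 2) + u n = (X + 2) * u (n + 1)) (a m : ℕ) :
    (u (m + a + 1) + u (m + a)) * morganVoyce R a = u (m + 2 * a + 1) + u m := by
  induction a using Nat.twoStepInduction generalizing m with
  | zero => simp [morganVoyce_zero]
  | one =>
    rw [morganVoyce_one]
    linear_combination -hu m - hu (m + 1)
  | more a ih ih' =>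
    linear_combination (norm := ring_nf)
      (u (m + a + 3) + u (m + a + 2)) * morganVoyce_add_two_add_self R a
        + (X + 2) * ih' (m + 1) - ih (m + 2) - hu (m + 2 * a + 3) - hu m

theorem stmt_0_general (a m k : ℕ) :
    (2 * a + m + k + 1).choose (2 * k) + (m + k).choose (2 * k) =
      ∑ j ∈ range (k + 1),
        ((a + m + j + 1).choose (2 * j) + (a + m + j).choose (2 * j)) *
          (a + k - j).choose (2 * (k - j)) := by
  have coeff_eq := congrArg (coeff · k)
    (add_mul_morganVoyce (morganVoyce_add_two_add_self ℤ) a m)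
  simp only [coeff_mul, Nat.sum_antidiagonal_eq_sum_range_succ_mk, coeff_add,
    coeff_morganVoyce] at coeff_eq
  norm_cast at coeff_eq
  convert coeff_eq.symm using 2 with j hj
  · congr 1; ring
  · rw [Nat.add_sub_assoc (mem_range_succ_iff.mp hj)]
    congr 3 <;> ring

theorem stmt_0 (n₁ n₂ n₃ : ℕ) :
    (2 * n₁ + n₂ + 2 * n₃ + 1).choose (2 * n₃) + (n₂ + 2 * n₃).choose (2 * n₃) =
      ∑ n₄ ∈ Finset.range (n₃ + 1),
        ((n₁ + n₂ + n₃ + n₄ + 1).choose (2 * n₄) + (n₁ + n₂ + n₃ + n₄).choose (2 * n₄)) *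
          (n₁ + n₃ - n₄).choose (2 * (n₃ - n₄)) := by
  simpa only [two_mul, add_assoc] using stmt_0_general n₁ (n₂ + n₃) n₃
end

section
/- For all nonnegative integers n₁, n₂, n₃, the following identity of binomial coefficients holds: C(2n₁+n₂+2n₃+2, 2n₃) + C(n₂+2n₃, 2n₃) = Σ_{n₄=0}^{n₃} C(n₁+n₂+n₃+n₄+1, 2n₄) · [C(n₁+n₃−n₄+1, 2(n₃−n₄)) + C(n₁+n₃−n₄, 2(n₃−n₄))], where C(a,b) denotes the ordinary binomial coefficient of nonnegative integers (equal to 0 when b > a). -/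
/-!
Write `s = (x - y) ^ 2` and `p = x * y`. One step of the recurrences of the homogenized Morgan-Voyce
polynomials `b`, `B` in `s` and `p` is a linear map with eigenvalues `x ^ 2` and `y ^ 2`, and
`(y, x - y)` is a left eigenvector for `x ^ 2`, whence `y * b n + (x - y) * B n = x ^ (2 * n + 1)`.
Adding `x` times this to its mirror image under `x ↔ y` expands `x ^ (2 * n + 2) + y ^ (2 * n + 2)`
in powers of `s` and `p`. At `x = 1 + X`, `y = 1`, multiplying by `(1 + X) ^ N` and comparing
coefficients gives the binomial identity.
-/

open Finset

section CommSemiring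

variable {R : Type*} [CommSemiring R]

/-- The Morgan-Voyce polynomial usually written `b_n`, homogenized to degree `n` in `s` and `p`;
`p = 1` is the classical case. -/
def morganVoyceEven (s p : R) (n : ℕ) : R :=
  ∑ ij ∈ antidiagonal n, ((n + ij.1).choose (2 * ij.1) : R) * (s ^ ij.1 * p ^ ij.2)

/-- The Morgan-Voyce polynomial usually written `B_n`, homogenized to degree `n` in `s` and `p`;
`p = 1` is the classical case. -/
def morganVoyceOdd (s p : R) (n : ℕ) : R :=
  ∑ ij ∈ antidiagonal n, ((n + 1 + ij.1).choose (2 * ij.1 + 1) : R) * (s ^ ij.1 * p ^ ij.2)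

theorem mul_morganVoyceEven (s p : R) (n : ℕ) :
    p * morganVoyceEven s p n = ∑ ij ∈ antidiagonal (n + 1),
      ((n + ij.1).choose (2 * ij.1) : R) * (s ^ ij.1 * p ^ ij.2) := by
  rw [Nat.sum_antidiagonal_succ', Nat.choose_eq_zero_of_lt (by lia : n + (n + 1) < 2 * (n + 1)),
    Nat.cast_zero, zero_mul, zero_add, morganVoyceEven, mul_sum]
  exact sum_congr rfl fun ij _ ↦ by ring

theorem mul_morganVoyceOdd (s p : R) (n : ℕ) :
    p * morganVoyceOdd s p n = ∑ ij ∈ antidiagonal (n + 1),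
      ((n + 1 + ij.1).choose (2 * ij.1 + 1) : R) * (s ^ ij.1 * p ^ ij.2) := by
  rw [Nat.sum_antidiagonal_succ',
    Nat.choose_eq_zero_of_lt (by lia : n + 1 + (n + 1) < 2 * (n + 1) + 1),
    Nat.cast_zero, zero_mul, zero_add, morganVoyceOdd, mul_sum]
  exact sum_congr rfl fun ij _ ↦ by ring

theorem morganVoyceEven_succ (s p : R) (n : ℕ) :
    morganVoyceEven s p (n + 1) = p * morganVoyceEven s p n + s * morganVoyceOdd s p n := by
  rw [mul_morganVoyceEven, morganVoyceEven, morganVoyceOdd, Nat.sum_antidiagonal_succ,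
    Nat.sum_antidiagonal_succ, mul_sum, add_assoc (_ * _),
    ← sum_add_distrib]
  congr 1
  · simp
  · refine sum_congr rfl fun ij _ ↦ ?_
    have pascal : (n + 1 + (ij.1 + 1)).choose (2 * (ij.1 + 1)) =
        (n + 1 + ij.1).choose (2 * ij.1 + 1) + (n + (ij.1 + 1)).choose (2 * (ij.1 + 1)) := by
      rw [show n + (ij.1 + 1) = n + 1 + ij.1 by ring]
      exact Nat.choose_succ_succ' _ _
    rw [pascal]
    push_cast
    ring

theorem morganVoyceOdd_succ (s p : R) (n : ℕ) :
    morganVoyceOdd s p (n + 1) = p * morganVoyceOdd s p n + morganVoyceEven s p (n + 1) := by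
  rw [mul_morganVoyceOdd, morganVoyceEven, morganVoyceOdd, ← sum_add_distrib]
  refine sum_congr rfl fun ij _ ↦ ?_
  rw [add_right_comm (n + 1) 1, Nat.choose_succ_succ']
  push_cast
  ring

end CommSemiring

section CommRing

variable {R : Type*} [CommRing R]

theorem mul_morganVoyceEven_add_sub_mul_morganVoyceOdd (x y : R) (n : ℕ) :
    y * morganVoyceEven ((x - y) ^ 2) (x * y) n + (x - y) * morganVoyceOdd ((x - y) ^ 2) (x * y) n =
      x ^ (2 * n + 1) := by
  induction n with
  | zero => simp [morganVoyceEven, morganVoyceOdd]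
  | succ n ih =>
    rw [morganVoyceOdd_succ, morganVoyceEven_succ]
    linear_combination x ^ 2 * ih

theorem morganVoyceEven_succ_add_mul_morganVoyceEven (x y : R) (n : ℕ) :
    morganVoyceEven ((x - y) ^ 2) (x * y) (n + 1) +
        x * y * morganVoyceEven ((x - y) ^ 2) (x * y) n =
      x ^ (2 * n + 2) + y ^ (2 * n + 2) := by
  have hx := mul_morganVoyceEven_add_sub_mul_morganVoyceOdd x y n
  have hy := mul_morganVoyceEven_add_sub_mul_morganVoyceOdd y x n
  rw [← neg_sub x y, neg_sq, mul_comm y x] at hy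
  rw [morganVoyceEven_succ]
  linear_combination x * hx + y * hy

theorem pow_add_pow_eq_sum_antidiagonal (x y : R) (n : ℕ) :
    x ^ (2 * n + 2) + y ^ (2 * n + 2) = ∑ ij ∈ antidiagonal (n + 1),
      (((n + 1 + ij.1).choose (2 * ij.1) + (n + ij.1).choose (2 * ij.1) : ℕ) : R) *
        (((x - y) ^ 2) ^ ij.1 * (x * y) ^ ij.2) := by
  rw [← morganVoyceEven_succ_add_mul_morganVoyceEven, mul_morganVoyceEven, morganVoyceEven,
    ← sum_add_distrib]
  simp only [Nat.cast_add, add_mul]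

end CommRing

open Polynomial in
theorem choose_add_choose_eq_sum_antidiagonal (a N r : ℕ) :
    (2 * a + 2 + N).choose r + N.choose r = ∑ ij ∈ antidiagonal (a + 1),
      ((a + 1 + ij.1).choose (2 * ij.1) + (a + ij.1).choose (2 * ij.1)) *
        if 2 * ij.1 ≤ r then (ij.2 + N).choose (r - 2 * ij.1) else 0 := by
  have expansion : (1 + X : ℤ[X]) ^ (2 * a + 2 + N) + (1 + X) ^ N = ∑ ij ∈ antidiagonal (a + 1),
      C (((a + 1 + ij.1).choose (2 * ij.1) + (a + ij.1).choose (2 * ij.1) : ℕ) : ℤ) *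
        (X ^ (2 * ij.1) * (1 + X) ^ (ij.2 + N)) := by
    calc (1 + X : ℤ[X]) ^ (2 * a + 2 + N) + (1 + X) ^ N
        = ((1 + X) ^ (2 * a + 2) + 1 ^ (2 * a + 2)) * (1 + X) ^ N := by ring
      _ = _ := by
        rw [pow_add_pow_eq_sum_antidiagonal, sum_mul]
        refine sum_congr rfl fun ij _ ↦ ?_
        rw [add_sub_cancel_left, mul_one, C_eq_natCast]
        ring
  have coeff_eq := congrArg (coeff · r) expansion
  simp only [coeff_add, coeff_one_add_X_pow, finsetSum_coeff, coeff_C_mul, coeff_X_pow_mul']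
    at coeff_eq
  exact_mod_cast coeff_eq

/-- Where `a + 1 + N - i` truncates, the second factor vanishes. -/
theorem choose_add_choose_eq_sum_range (a N r : ℕ) :
    (2 * a + 2 + N).choose r + N.choose r = ∑ i ∈ range (r / 2 + 1),
      (a + 1 + N - i).choose (r - 2 * i) *
        ((a + i + 1).choose (2 * i) + (a + i).choose (2 * i)) := by
  rw [choose_add_choose_eq_sum_antidiagonal, Nat.sum_antidiagonal_eq_sum_range_succ_mk]
  simp only [mul_ite, mul_zero]
  rw [← sum_filter]
  refine sum_subset_zero_on_sdiff (fun i hi ↦ ?_) (fun i hi ↦ ?_) (fun i hi ↦ ?_)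
  · simp only [mem_filter, mem_range] at hi ⊢
    lia
  · simp only [mem_sdiff, mem_filter, mem_range] at hi
    rw [Nat.choose_eq_zero_of_lt (by lia : a + i + 1 < 2 * i),
      Nat.choose_eq_zero_of_lt (by lia : a + i < 2 * i), add_zero, mul_zero]
  · simp only [mem_filter, mem_range] at hi
    rw [mul_comm, add_right_comm a 1 i, show a + 1 - i + N = a + 1 + N - i by lia]

theorem stmt_1 (n₁ n₂ n₃ : ℕ) :
    (2 * n₁ + n₂ + 2 * n₃ + 2).choose (2 * n₃) + (n₂ + 2 * n₃).choose (2 * n₃) =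
      ∑ n₄ ∈ Finset.range (n₃ + 1),
        (n₁ + n₂ + n₃ + n₄ + 1).choose (2 * n₄) *
          ((n₁ + n₃ - n₄ + 1).choose (2 * (n₃ - n₄)) + (n₁ + n₃ - n₄).choose (2 * (n₃ - n₄))) := by
  rw [show 2 * n₁ + n₂ + 2 * n₃ + 2 = 2 * n₁ + 2 + (n₂ + 2 * n₃) by ring,
    choose_add_choose_eq_sum_range, Nat.mul_div_cancel_left n₃ two_pos, ← sum_range_reflect]
  refine sum_congr rfl fun n₄ hn₄ ↦ ?_
  have hle : n₄ ≤ n₃ := mem_range_succ_iff.mp hn₄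
  rw [add_tsub_cancel_right, Nat.add_sub_assoc hle,
    show n₁ + 1 + (n₂ + 2 * n₃) - (n₃ - n₄) = n₁ + n₂ + n₃ + n₄ + 1 by lia,
    show 2 * n₃ - 2 * (n₃ - n₄) = 2 * n₄ by lia]
end

section
/- For every nonnegative integer n and every rational number x, one has x^(2n) + (x+1)^(2n) = Σ_{m=0}^{n} C(2n−m, m) · x^m (x+1)^m + Σ_{m=1}^{n} C(2n−m−1, m−1) · x^m (x+1)^m + (1 if n = 0 else 0). (The extra term for n = 0 encodes the convention C(−1,−1) = 1 used in the paper's formulation, in which the coefficient of x^m(x+1)^m is C(2n−m, m) + C(2n−m−1, m−1).) -/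
/-!
Put `y = x (x + 1)`. Then `x + 1` and `-x` are the roots of `t ^ 2 = t + y`. Powers of a root are
linear in the root, with coefficients built from the sequence `J (N + 2) = J (N + 1) + y J N`, whose
closed form is a diagonal sum of binomial coefficients. In the sum of the even powers of both roots
the linear terms collapse, leaving `J (2 k + 2) + y J (2 k)`. The relation for the root `-x` can be
written without subtraction, so the argument works over a semiring.
-/

section Jacobsthal

open Finset

variable {R : Type*} [CommSemiring R]

/-- The Jacobsthal polynomials evaluated at `y`, indexed so that the first two values are `1`: the
solution of `J (N + 2) = J (N + 1) + y * J N`, given by its closed form. -/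
def jacobsthal (y : R) (N : ℕ) : R :=
  ∑ p ∈ antidiagonal N, (p.2.choose p.1 : R) * y ^ p.1

theorem jacobsthal_zero (y : R) : jacobsthal y 0 = 1 := by simp [jacobsthal]

theorem jacobsthal_one (y : R) : jacobsthal y 1 = 1 := by
  simp [jacobsthal, Nat.antidiagonal_succ]

theorem jacobsthal_add_two (y : R) (N : ℕ) :
    jacobsthal y (N + 2) = jacobsthal y (N + 1) + y * jacobsthal y N := by
  have jacobsthal_succ : jacobsthal y (N + 1) =
      1 + ∑ p ∈ antidiagonal N, (p.2.choose (p.1 + 1) : R) * y ^ (p.1 + 1) := by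
    simp [jacobsthal, Nat.sum_antidiagonal_succ]
  have pascal (p : ℕ × ℕ) : ((p.2 + 1).choose (p.1 + 1) : R) * y ^ (p.1 + 1) =
      y * ((p.2.choose p.1 : R) * y ^ p.1) + (p.2.choose (p.1 + 1) : R) * y ^ (p.1 + 1) := by
    rw [Nat.choose_succ_succ, Nat.cast_add]
    ring
  calc jacobsthal y (N + 2)
      = 1 + ∑ p ∈ antidiagonal N, ((p.2 + 1).choose (p.1 + 1) : R) * y ^ (p.1 + 1) := by
        simp [jacobsthal, Nat.antidiagonal_succ_succ']
    _ = jacobsthal y (N + 1) + y * jacobsthal y N := by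
        rw [sum_congr rfl fun p _ => pascal p, sum_add_distrib, ← mul_sum, jacobsthal_succ,
          jacobsthal, add_left_comm, add_comm]

theorem jacobsthal_eq_sum_range (y : R) (N : ℕ) :
    jacobsthal y N = ∑ m ∈ range (N / 2 + 1), ((N - m).choose m : R) * y ^ m := by
  rw [jacobsthal, Nat.sum_antidiagonal_eq_sum_range_succ_mk]
  refine (sum_subset (range_subset_range.2 (by lia)) fun m _ hm => ?_).symm
  rw [Nat.choose_eq_zero_of_lt (by grind), Nat.cast_zero, zero_mul]

theorem mul_jacobsthal_eq_sum_Icc (y : R) (N : ℕ) :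
    y * jacobsthal y N =
      ∑ m ∈ Icc 1 (N / 2 + 1), ((N + 2 - m - 1).choose (m - 1) : R) * y ^ m := by
  rw [jacobsthal_eq_sum_range, mul_sum, range_eq_Ico, ← Ico_add_one_right_eq_Icc,
    ← sum_Ico_add' _ 0 (N / 2 + 1) 1]
  refine sum_congr rfl fun m _ => ?_
  rw [show N + 2 - (m + 1) - 1 = N - m by lia, Nat.add_sub_cancel]
  ring

theorem pow_add_two_eq_jacobsthal {t y : R} (ht : t ^ 2 = t + y) (N : ℕ) :
    t ^ (N + 2) = jacobsthal y (N + 1) * t + y * jacobsthal y N := by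
  induction N with
  | zero => rw [jacobsthal_one, jacobsthal_zero, ht, one_mul, mul_one]
  | succ N ih =>
    calc t ^ (N + 3) = t ^ (N + 2) * t := pow_succ t (N + 2)
      _ = jacobsthal y (N + 1) * t ^ 2 + y * jacobsthal y N * t := by rw [ih]; ring
      _ = jacobsthal y (N + 2) * t + y * jacobsthal y (N + 1) := by
        rw [ht, jacobsthal_add_two]; ring

/-- The even powers of the root `-u` of `t ^ 2 = t + y`, with no negation. -/
theorem pow_even_add_jacobsthal_mul {u y : R} (hu : u ^ 2 + u = y) (k : ℕ) :
    u ^ (2 * k + 2) + jacobsthal y (2 * k + 1) * u = y * jacobsthal y (2 * k) := by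
  induction k with
  | zero => rw [Nat.mul_zero, jacobsthal_one, jacobsthal_zero, ← hu]; ring
  | succ k ih =>
    calc u ^ (2 * k + 4) + jacobsthal y (2 * k + 3) * u
        = u ^ 2 * (u ^ (2 * k + 2) + jacobsthal y (2 * k + 1) * u)
            + u ^ 2 * jacobsthal y (2 * k + 1) + jacobsthal y (2 * k + 2) * u := by
          rw [jacobsthal_add_two y (2 * k + 1), ← hu]; ring
      _ = u ^ 2 * jacobsthal y (2 * k + 2) + jacobsthal y (2 * k + 2) * u := by
          rw [ih, jacobsthal_add_two y (2 * k)]; ring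
      _ = y * jacobsthal y (2 * k + 2) := by rw [← hu]; ring

theorem pow_even_add_add_one_pow_even_eq_jacobsthal (x : R) (k : ℕ) :
    x ^ (2 * k + 2) + (x + 1) ^ (2 * k + 2) =
      jacobsthal (x * (x + 1)) (2 * k + 2) + x * (x + 1) * jacobsthal (x * (x + 1)) (2 * k) := by
  set y := x * (x + 1) with hy
  have hx : x ^ 2 + x = y := by rw [hy]; ring
  have hx' : (x + 1) ^ 2 = x + 1 + y := by rw [hy]; ring
  calc x ^ (2 * k + 2) + (x + 1) ^ (2 * k + 2)
      = (x ^ (2 * k + 2) + jacobsthal y (2 * k + 1) * x)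
          + (jacobsthal y (2 * k + 1) + y * jacobsthal y (2 * k)) := by
        rw [pow_add_two_eq_jacobsthal hx']; ring
    _ = jacobsthal y (2 * k + 2) + y * jacobsthal y (2 * k) := by
        rw [pow_even_add_jacobsthal_mul hx, jacobsthal_add_two]; ring

theorem stmt_2_general (n : ℕ) (x : R) :
    x ^ (2 * n) + (x + 1) ^ (2 * n) =
      (∑ m ∈ range (n + 1), ((2 * n - m).choose m : R) * x ^ m * (x + 1) ^ m) +
        (∑ m ∈ Icc 1 n, ((2 * n - m - 1).choose (m - 1) : R) * x ^ m * (x + 1) ^ m) +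
        (if n = 0 then 1 else 0) := by
  simp only [mul_assoc, ← mul_pow]
  cases n with
  | zero => simp
  | succ k =>
    rw [mul_add_one, pow_even_add_add_one_pow_even_eq_jacobsthal,
      jacobsthal_eq_sum_range _ (2 * k + 2), mul_jacobsthal_eq_sum_Icc, if_neg k.succ_ne_zero,
      add_zero, Nat.add_div_right _ two_pos, Nat.mul_div_cancel_left k two_pos]

end Jacobsthal

theorem stmt_2 (n : ℕ) (x : ℚ) :
    x ^ (2 * n) + (x + 1) ^ (2 * n) =
      (∑ m ∈ Finset.range (n + 1), ((2 * n - m).choose m : ℚ) * x ^ m * (x + 1) ^ m) +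
        (∑ m ∈ Finset.Icc 1 n, ((2 * n - m - 1).choose (m - 1) : ℚ) * x ^ m * (x + 1) ^ m) +
        (if n = 0 then 1 else 0) :=
  stmt_2_general n x
end

section
/- For every nonnegative integer n and every rational number x, one has x^(2n+1) + (x+1)^(2n+1) = Σ_{m=0}^{n} C(2n−m, m) · (x^(m+1) (x+1)^m + x^m (x+1)^(m+1)), where C(a,b) denotes the ordinary binomial coefficient of nonnegative integers. -/
/-!
By Pascal's rule the sums `S k = ∑ m, (k - m).choose m * p ^ m` satisfy the recurrence
`S (k + 2) = S (k + 1) + p * S k`. For `p = x * (x + 1)` its characteristic roots are `x + 1` and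
`-x`, which gives the Binet formula `(2 * x + 1) * S k = (x + 1) ^ (k + 1) - (-x) ^ (k + 1)`. The
theorem is its case `k = 2 * n`, with the factor `2 * x + 1 = x + (x + 1)` moved into the sum.
-/

open Finset

section ShallowDiagonal

variable {R : Type*} [CommSemiring R]

/-- The sum of the `k`-th shallow diagonal of Pascal's triangle, with `i.choose j` weighted by
`p ^ j`, i.e. the Jacobsthal polynomial of index `k + 1` at `p`. Summing over `i + j = k` instead of
writing `(k - j).choose j` avoids truncated subtraction. -/
def shallowDiagonalSum (p : R) (k : ℕ) : R :=
  ∑ ij ∈ antidiagonal k, (ij.1.choose ij.2 : R) * p ^ ij.2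

theorem shallowDiagonalSum_zero (p : R) : shallowDiagonalSum p 0 = 1 := by
  simp [shallowDiagonalSum]

theorem shallowDiagonalSum_one (p : R) : shallowDiagonalSum p 1 = 1 := by
  simp [shallowDiagonalSum, Nat.antidiagonal_succ]

theorem shallowDiagonalSum_add_two (p : R) (k : ℕ) :
    shallowDiagonalSum p (k + 2) = shallowDiagonalSum p (k + 1) + p * shallowDiagonalSum p k := by
  have pascal (i j : ℕ) : ((i + 1).choose (j + 1) : R) * p ^ (j + 1) =
      p * ((i.choose j : R) * p ^ j) + (i.choose (j + 1) : R) * p ^ (j + 1) := by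
    rw [Nat.choose_succ_succ', Nat.cast_add]
    ring
  have diagonal_add_two : shallowDiagonalSum p (k + 2) =
      1 + ∑ ij ∈ antidiagonal k, ((ij.1 + 1).choose (ij.2 + 1) : R) * p ^ (ij.2 + 1) := by
    simp [shallowDiagonalSum, Nat.antidiagonal_succ_succ']
  have diagonal_add_one : shallowDiagonalSum p (k + 1) =
      1 + ∑ ij ∈ antidiagonal k, (ij.1.choose (ij.2 + 1) : R) * p ^ (ij.2 + 1) := by
    simp [shallowDiagonalSum, Nat.antidiagonal_succ']
  rw [diagonal_add_two, diagonal_add_one, shallowDiagonalSum]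
  simp only [pascal, sum_add_distrib, mul_sum]
  ring

theorem shallowDiagonalSum_eq_sum_range (p : R) (k : ℕ) :
    shallowDiagonalSum p k = ∑ m ∈ range (k / 2 + 1), ((k - m).choose m : R) * p ^ m := by
  rw [shallowDiagonalSum, ← Nat.sum_antidiagonal_swap, Nat.sum_antidiagonal_eq_sum_range_succ_mk]
  refine (sum_subset (range_subset_range.2 (by lia)) fun m _ hm => ?_).symm
  have choose_eq_zero : (k - m).choose m = 0 :=
    Nat.choose_eq_zero_of_lt (by rw [mem_range] at hm; lia)
  simp [choose_eq_zero]

-- The two parities are separated so that no subtraction occurs; each feeds the other's induction.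
theorem two_mul_add_one_mul_shallowDiagonalSum_even_and_odd (x : R) (n : ℕ) :
    (2 * x + 1) * shallowDiagonalSum (x * (x + 1)) (2 * n) =
        x ^ (2 * n + 1) + (x + 1) ^ (2 * n + 1) ∧
      (2 * x + 1) * shallowDiagonalSum (x * (x + 1)) (2 * n + 1) + x ^ (2 * n + 2) =
        (x + 1) ^ (2 * n + 2) := by
  set S := shallowDiagonalSum (x * (x + 1))
  have S_add_two (k : ℕ) : S (k + 2) = S (k + 1) + x * (x + 1) * S k :=
    shallowDiagonalSum_add_two _ k
  induction n with
  | zero =>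
    simp only [S, mul_zero, zero_add, shallowDiagonalSum_zero, shallowDiagonalSum_one]
    constructor <;> ring
  | succ n ih =>
    obtain ⟨even, odd⟩ := ih
    have even_succ : (2 * x + 1) * S (2 * n + 2) = x ^ (2 * n + 3) + (x + 1) ^ (2 * n + 3) :=
      calc (2 * x + 1) * S (2 * n + 2)
        _ = (2 * x + 1) * S (2 * n + 1) + x * (x + 1) * ((2 * x + 1) * S (2 * n)) := by
          rw [S_add_two]; ring
        _ = ((2 * x + 1) * S (2 * n + 1) + x ^ (2 * n + 2)) + x ^ (2 * n + 3) +
              x * (x + 1) ^ (2 * n + 2) := by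
          rw [even]; ring
        _ = x ^ (2 * n + 3) + (x + 1) ^ (2 * n + 3) := by
          rw [odd]; ring
    have odd_succ : (2 * x + 1) * S (2 * n + 3) + x ^ (2 * n + 4) = (x + 1) ^ (2 * n + 4) :=
      calc (2 * x + 1) * S (2 * n + 3) + x ^ (2 * n + 4)
        _ = (2 * x + 1) * S (2 * n + 2) + x * (x + 1) * ((2 * x + 1) * S (2 * n + 1)) +
              x ^ (2 * n + 4) := by
          rw [S_add_two]; ring
        _ = x * (x + 1) * ((2 * x + 1) * S (2 * n + 1) + x ^ (2 * n + 2)) +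
              (x + 1) ^ (2 * n + 3) := by
          rw [even_succ]; ring
        _ = (x + 1) ^ (2 * n + 4) := by
          rw [odd]; ring
    exact ⟨even_succ, odd_succ⟩

theorem stmt_3_general (n : ℕ) (x : R) :
    x ^ (2 * n + 1) + (x + 1) ^ (2 * n + 1) =
      ∑ m ∈ range (n + 1),
        ((2 * n - m).choose m : R) * (x ^ (m + 1) * (x + 1) ^ m + x ^ m * (x + 1) ^ (m + 1)) := by
  rw [← (two_mul_add_one_mul_shallowDiagonalSum_even_and_odd x n).1,
    shallowDiagonalSum_eq_sum_range, Nat.mul_div_cancel_left n two_pos, mul_sum]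
  refine sum_congr rfl fun m _ => ?_
  rw [mul_pow]
  ring

end ShallowDiagonal

theorem stmt_3 (n : ℕ) (x : ℚ) :
    x ^ (2 * n + 1) + (x + 1) ^ (2 * n + 1) =
      ∑ m ∈ Finset.range (n + 1),
        ((2 * n - m).choose m : ℚ) * (x ^ (m + 1) * (x + 1) ^ m + x ^ m * (x + 1) ^ (m + 1)) :=
  stmt_3_general n x
end

section
/- For every nonnegative integer n and all rational numbers x and y, one has B(x+y+n, 2n) + B(x−y+n, 2n) = Σ_{m=0}^{n} B(x+m, 2m) · [B(y+n−m, 2(n−m)) + B(y−1+n−m, 2(n−m))], where B(t,k) denotes the generalized binomial coefficient t(t−1)⋯(t−k+1)/k! for a rational number t and a nonnegative integer k. -/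
/-!
Put `F t = ∑ n, B(t + n, 2n) Xⁿ`. Pascal's rule gives `F (t + 1) + F (t - 1) = (2 + X) F t`, and
`F 0 = F (-1) = 1`. Hence, for fixed `x`, both `F (x + y) + F (x - y)` and `F x * (F y + F (-y))`
satisfy the same second-order recurrence in `y`, with the same values `2 F x` at `y = 0` and
`(2 + X) F x` at `y = 1`, so they agree at every natural number `y`. By Vandermonde's identity and
the reflection `B(-t + n, 2n) = B(t - 1 + n, 2n)`, each coefficient of their difference is a linear
combination of the functions `y ↦ B(y, k)`, and such a combination is determined by its values
on `ℕ`.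
-/

open Finset PowerSeries

variable {R : Type*} [CommRing R] [BinomialRing R]

variable (R) in
/-- The functions `R → R` that are `R`-linear combinations of the binomial coefficients
`y ↦ Ring.choose y k`. They play the role of polynomial functions over a binomial ring, which need
not contain the denominators `1 / k!`. -/
noncomputable def chooseSpan : Submodule R (R → R) :=
  Submodule.span R (Set.range fun (k : ℕ) (y : R) => Ring.choose y k)

lemma choose_add_mem_chooseSpan (r : R) (k : ℕ) :
    (fun y => Ring.choose (y + r) k) ∈ chooseSpan R := by
  have vandermonde : (fun y => Ring.choose (y + r) k) =
      ∑ a ∈ antidiagonal k, Ring.choose r a.2 • fun y => Ring.choose y a.1 := by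
    ext y
    simp only [Ring.add_choose_eq k (Commute.all y r), Finset.sum_apply, Pi.smul_apply,
      smul_eq_mul, mul_comm]
  rw [vandermonde]
  exact sum_mem fun a _ => Submodule.smul_mem _ _ (Submodule.subset_span ⟨a.1, rfl⟩)

lemma eq_zero_of_mem_chooseSpan {f : R → R} (hf : f ∈ chooseSpan R) (hnat : ∀ k : ℕ, f k = 0) :
    f = 0 := by
  obtain ⟨a, rfl⟩ := Finsupp.mem_span_range_iff_exists_finsupp.mp hf
  suffices ∀ k, a k = 0 by simp [Finsupp.sum, this]
  intro k
  induction k using Nat.strong_induction_on with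
  | _ k ih =>
    -- `B(k, j)` vanishes for `j > k`, so only the term `j = k` survives at `k`.
    have hterm : ∀ j ≠ k, a j * Ring.choose (k : R) j = 0 := by
      intro j hj
      rcases hj.lt_or_gt with hjk | hkj
      · rw [ih j hjk, zero_mul]
      · rw [Ring.choose_natCast, Nat.choose_eq_zero_of_lt hkj, Nat.cast_zero, mul_zero]
    have heval := hnat k
    simp only [Finsupp.sum, Finset.sum_apply, Pi.smul_apply, smul_eq_mul] at heval
    rw [Finset.sum_eq_single k (fun j _ => hterm j) fun hk => by
      rw [Finsupp.notMem_support_iff.mp hk, zero_mul]] at heval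
    simpa [Ring.choose_natCast] using heval

/-- The generalized binomial coefficient `B(t + n, 2n)`, which is symmetric about `t = -1/2`. -/
noncomputable def centeredChoose (n : ℕ) (t : R) : R := Ring.choose (t + n) (2 * n)

lemma centeredChoose_zero_left (t : R) : centeredChoose 0 t = 1 := by
  simp [centeredChoose]

lemma centeredChoose_succ_zero (n : ℕ) : centeredChoose (n + 1) (0 : R) = 0 := by
  rw [centeredChoose, zero_add, Ring.choose_natCast, Nat.choose_eq_zero_of_lt (by omega),
    Nat.cast_zero]

lemma centeredChoose_neg (n : ℕ) (t : R) : centeredChoose n (-t) = centeredChoose n (t - 1) := by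
  have h := Ring.choose_neg (t - n) (2 * n)
  rw [Int.negOnePow_even _ (by simp), one_smul] at h
  unfold centeredChoose
  convert h using 2 <;> push_cast <;> ring

lemma centeredChoose_succ_add_one_add_sub_one (n : ℕ) (t : R) :
    centeredChoose (n + 1) (t + 1) + centeredChoose (n + 1) (t - 1) =
      2 * centeredChoose (n + 1) t + centeredChoose n t := by
  have h₁ := Ring.choose_succ_succ (t + n + 1) (2 * n + 1)
  have h₂ := Ring.choose_succ_succ (t + n) (2 * n + 1)
  have h₃ := Ring.choose_succ_succ (t + n) (2 * n)
  have e₁ : t + 1 + ((n + 1 : ℕ) : R) = t + n + 1 + 1 := by push_cast; ring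
  have e₂ : t + ((n + 1 : ℕ) : R) = t + n + 1 := by push_cast; ring
  have e₃ : t - 1 + ((n + 1 : ℕ) : R) = t + n := by push_cast; ring
  simp only [centeredChoose, e₁, e₂, e₃, show 2 * (n + 1) = 2 * n + 1 + 1 by ring]
  linear_combination h₁ - h₂ + h₃

lemma centeredChoose_add_add_sub_mem_chooseSpan (n : ℕ) (r : R) :
    (fun y => centeredChoose n (r + y) + centeredChoose n (r - y)) ∈ chooseSpan R := by
  have shift_mem : ∀ s : R, (fun y => centeredChoose n (y + s)) ∈ chooseSpan R := fun s => by
    simpa only [centeredChoose, add_assoc] using choose_add_mem_chooseSpan (s + n) (2 * n)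
  have reflect : ∀ y, centeredChoose n (r - y) = centeredChoose n (y + (-r - 1)) := fun y => by
    rw [← neg_sub, centeredChoose_neg]
    congr 1
    ring
  simp only [reflect, add_comm r]
  exact add_mem (shift_mem r) (shift_mem (-r - 1))

/-- The generating function `∑ n, B(t + n, 2n) Xⁿ` of the centered binomial coefficients. -/
noncomputable def centeredChooseSeries (t : R) : R⟦X⟧ := PowerSeries.mk fun n => centeredChoose n t

lemma coeff_centeredChooseSeries (n : ℕ) (t : R) :
    coeff n (centeredChooseSeries t) = centeredChoose n t :=
  coeff_mk _ _

lemma centeredChooseSeries_zero : centeredChooseSeries (0 : R) = 1 := by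
  ext (_ | n) <;> simp [coeff_centeredChooseSeries, coeff_one, centeredChoose_zero_left,
    centeredChoose_succ_zero]

lemma centeredChooseSeries_neg (t : R) :
    centeredChooseSeries (-t) = centeredChooseSeries (t - 1) := by
  ext n
  simp only [coeff_centeredChooseSeries, centeredChoose_neg]

lemma centeredChooseSeries_add_one_add_sub_one (t : R) :
    centeredChooseSeries (t + 1) + centeredChooseSeries (t - 1) =
      (2 + X) * centeredChooseSeries t := by
  rw [add_mul, two_mul]
  ext (_ | n)
  · simp only [map_add, coeff_zero_X_mul, coeff_centeredChooseSeries, centeredChoose_zero_left,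
      add_zero]
  · simp only [map_add, coeff_succ_X_mul, coeff_centeredChooseSeries,
      centeredChoose_succ_add_one_add_sub_one, two_mul]

lemma centeredChooseSeries_one_add_neg_one :
    centeredChooseSeries (1 : R) + centeredChooseSeries (-1) = 2 + X := by
  simpa [centeredChooseSeries_zero] using centeredChooseSeries_add_one_add_sub_one (0 : R)

lemma centeredChooseSeries_add_add_sub_recurrence (z t : R) :
    centeredChooseSeries (z + (t + 2)) + centeredChooseSeries (z - (t + 2)) =
      (2 + X) * (centeredChooseSeries (z + (t + 1)) + centeredChooseSeries (z - (t + 1))) -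
        (centeredChooseSeries (z + t) + centeredChooseSeries (z - t)) := by
  have h₁ := centeredChooseSeries_add_one_add_sub_one (z + (t + 1))
  have h₂ := centeredChooseSeries_add_one_add_sub_one (z - (t + 1))
  rw [show z + (t + 1) + 1 = z + (t + 2) by ring, show z + (t + 1) - 1 = z + t by ring] at h₁
  rw [show z - (t + 1) + 1 = z - t by ring, show z - (t + 1) - 1 = z - (t + 2) by ring] at h₂
  linear_combination h₁ + h₂

lemma centeredChooseSeries_add_natCast_add_sub_natCast (x : R) (k : ℕ) :
    centeredChooseSeries (x + k) + centeredChooseSeries (x - k) =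
      centeredChooseSeries x * (centeredChooseSeries (k : R) + centeredChooseSeries (-k : R)) := by
  induction k using Nat.twoStepInduction with
  | zero => simp [centeredChooseSeries_zero, mul_add]
  | one =>
    rw [Nat.cast_one, centeredChooseSeries_add_one_add_sub_one,
      centeredChooseSeries_one_add_neg_one, mul_comm]
  | more k ih₀ ih₁ =>
    have hx := centeredChooseSeries_add_add_sub_recurrence x (k : R)
    have h₀ := centeredChooseSeries_add_add_sub_recurrence 0 (k : R)
    simp only [zero_add, zero_sub] at h₀
    push_cast at ih₁ ⊢
    rw [hx, h₀, ih₀, ih₁]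
    ring

lemma centeredChooseSeries_add_add_sub (x y : R) :
    centeredChooseSeries (x + y) + centeredChooseSeries (x - y) =
      centeredChooseSeries x * (centeredChooseSeries y + centeredChooseSeries (-y)) := by
  let difference (z : R) : R⟦X⟧ := centeredChooseSeries (x + z) + centeredChooseSeries (x - z) -
    centeredChooseSeries x * (centeredChooseSeries z + centeredChooseSeries (-z))
  have hmem : ∀ n, (fun z => coeff n (difference z)) ∈ chooseSpan R := by
    intro n
    have hsum : ∑ a ∈ antidiagonal n, centeredChoose a.1 x •
        (fun z => centeredChoose a.2 (0 + z) + centeredChoose a.2 (0 - z)) ∈ chooseSpan R :=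
      sum_mem fun a _ =>
        Submodule.smul_mem _ _ (centeredChoose_add_add_sub_mem_chooseSpan a.2 0)
    convert sub_mem (centeredChoose_add_add_sub_mem_chooseSpan n x) hsum using 1
    ext z
    simp [difference, coeff_mul, coeff_centeredChooseSeries]
  have hnat : ∀ n (k : ℕ), coeff n (difference k) = 0 := fun n k => by
    simp [difference, centeredChooseSeries_add_natCast_add_sub_natCast]
  refine sub_eq_zero.mp (PowerSeries.ext fun n => ?_)
  exact congrFun (eq_zero_of_mem_chooseSpan (hmem n) (hnat n)) y

theorem stmt_4_general (n : ℕ) (x y : R) :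
    Ring.choose (x + y + n) (2 * n) + Ring.choose (x - y + n) (2 * n) =
      ∑ m ∈ Finset.range (n + 1),
        Ring.choose (x + m) (2 * m) *
          (Ring.choose (y + (n - m : ℕ)) (2 * (n - m)) +
            Ring.choose (y - 1 + (n - m : ℕ)) (2 * (n - m))) := by
  have h := congrArg (coeff n) (centeredChooseSeries_add_add_sub x y)
  simp only [centeredChooseSeries_neg, coeff_mul, map_add, coeff_centeredChooseSeries] at h
  rwa [Nat.sum_antidiagonal_eq_sum_range_succ_mk] at h

theorem stmt_4 (n : ℕ) (x y : ℚ) :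
    Ring.choose (x + y + n) (2 * n) + Ring.choose (x - y + n) (2 * n) =
      ∑ m ∈ Finset.range (n + 1),
        Ring.choose (x + m) (2 * m) *
          (Ring.choose (y + (n - m : ℕ)) (2 * (n - m)) +
            Ring.choose (y - 1 + (n - m : ℕ)) (2 * (n - m))) :=
  stmt_4_general n x y
end

section
/- For every nonnegative integer n and all rational numbers x and y, one has B(x+y+n, 2n+1) + B(x−y+n, 2n+1) = Σ_{m=0}^{n} B(x+m, 2m+1) · [B(y+n−m, 2(n−m)) + B(y−1+n−m, 2(n−m))], where B(t,k) denotes the generalized binomial coefficient t(t−1)⋯(t−k+1)/k! for a rational number t and a nonnegative integer k. -/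
/-!
Put `S x = ∑ₘ B(x + m, 2m + 1) uᵐ` and `C y = ∑ₘ (B(y + m, 2m) + B(y - 1 + m, 2m)) uᵐ`.
If `u = q - 2 + q⁻¹`, then `S x = (qˣ - q⁻ˣ) / (q - q⁻¹)` and `C y = qʸ + q⁻ʸ`, so that the identity
is the addition formula `S (x + y) + S (x - y) = S x * C y` for the hyperbolic sine. Formally,
Pascal's rule gives `S (x + 1) = (2 + u) * S x - S (x - 1)`, so for natural `x` both sides of the
addition formula satisfy the same second-order recurrence, and the cases `x = 0` and `x = 1` hold
because `S` is odd and `C y = S (y + 1) - S (y - 1)`. In each coefficient both sides are finite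
combinations of the functions `x ↦ B(x, k)`, and such a combination is determined by its values on
the natural numbers.
-/

open Finset PowerSeries

section BinomialFunctions

variable {R : Type*} [CommRing R] [BinomialRing R]

variable (R) in
/-- The functions on a binomial ring that have a finite Newton expansion `x ↦ ∑ₖ cₖ B(x, k)`. They
take the place of polynomial functions: over a ring such as `ℤ`, the binomial coefficient `B(x, k)`
is not given by a polynomial with coefficients in the ring. -/
def binomialFunctions : Submodule R (R → R) :=
  Submodule.span R (Set.range fun (k : ℕ) (x : R) => Ring.choose x k)

theorem choose_add_mem_binomialFunctions (a : R) (k : ℕ) :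
    (fun x => Ring.choose (x + a) k) ∈ binomialFunctions R := by
  have vandermonde : (fun x => Ring.choose (x + a) k) =
      ∑ ij ∈ antidiagonal k, Ring.choose a ij.2 • fun x => Ring.choose x ij.1 := by
    ext x
    simp only [Ring.add_choose_eq k (Commute.all x a), Finset.sum_apply, Pi.smul_apply,
      smul_eq_mul, mul_comm (Ring.choose a _)]
  rw [vandermonde]
  exact Submodule.sum_mem _ fun ij _ =>
    Submodule.smul_mem _ _ (Submodule.subset_span ⟨ij.1, rfl⟩)

theorem eq_zero_of_sum_mul_choose_natCast_eq_zero {c : ℕ →₀ R}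
    (h : ∀ n : ℕ, (c.sum fun k r => r * Ring.choose (n : R) k) = 0) : c = 0 := by
  ext n
  induction n using Nat.strong_induction_on with
  | _ n ih =>
    have hn : (c.sum fun k r => r * Ring.choose (n : R) k) = c n * Ring.choose (n : R) n := by
      refine Finsupp.sum_eq_single n (fun k _ hk => ?_) fun _ => zero_mul _
      rcases hk.lt_or_gt with hk | hk
      · rw [ih k hk, Finsupp.zero_apply, zero_mul]
      · rw [Ring.choose_natCast, Nat.choose_eq_zero_of_lt hk, Nat.cast_zero, mul_zero]
    rwa [h, Ring.choose_natCast, Nat.choose_self, Nat.cast_one, mul_one, eq_comm] at hn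

theorem eq_of_natCast_eq_of_mem_binomialFunctions {f g : R → R}
    (hf : f ∈ binomialFunctions R) (hg : g ∈ binomialFunctions R)
    (h : ∀ n : ℕ, f n = g n) : f = g := by
  obtain ⟨c, hc⟩ := Finsupp.mem_span_range_iff_exists_finsupp.mp (Submodule.sub_mem _ hf hg)
  have hc_zero : c = 0 := eq_zero_of_sum_mul_choose_natCast_eq_zero fun n => by
    have := congrFun hc n
    simpa [Finsupp.sum, h] using this
  rwa [hc_zero, Finsupp.sum_zero_index, eq_comm, sub_eq_zero] at hc

end BinomialFunctions

section CentralSeries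

variable {R : Type*} [CommRing R] [BinomialRing R]

/-- The generating series `∑ₘ B(x + m, 2m + 1) uᵐ` of the central binomial coefficients of odd
order, the formal counterpart of the hyperbolic sine. -/
noncomputable def oddCentralSeries (x : R) : R⟦X⟧ :=
  mk fun m => Ring.choose (x + m) (2 * m + 1)

/-- The generating series `∑ₘ (B(y + m, 2m) + B(y - 1 + m, 2m)) uᵐ` of the symmetrized central
binomial coefficients of even order, the formal counterpart of twice the hyperbolic cosine. -/
noncomputable def evenCentralSeries (y : R) : R⟦X⟧ :=
  mk fun m => Ring.choose (y + m) (2 * m) + Ring.choose (y - 1 + m) (2 * m)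

theorem oddCentralSeries_zero : oddCentralSeries (0 : R) = 0 := by
  ext m
  rw [oddCentralSeries, coeff_mk, zero_add, Ring.choose_natCast,
    Nat.choose_eq_zero_of_lt (by lia), Nat.cast_zero, map_zero]

theorem oddCentralSeries_one : oddCentralSeries (1 : R) = 1 := by
  ext m
  rw [oddCentralSeries, coeff_mk, coeff_one, ← Nat.cast_one, ← Nat.cast_add, Ring.choose_natCast]
  split_ifs with hm
  · simp [hm]
  · rw [Nat.choose_eq_zero_of_lt (by lia), Nat.cast_zero]

theorem oddCentralSeries_neg (x : R) : oddCentralSeries (-x) = -oddCentralSeries x := by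
  ext m
  have h := Ring.choose_neg (x - m) (2 * m + 1)
  rw [Int.negOnePow_odd _ ⟨m, by push_cast; ring⟩, Units.neg_smul, one_smul,
    show -(x - m) = -x + m by ring,
    show x - m + ((2 * m + 1 : ℕ) : R) - 1 = x + m by push_cast; ring] at h
  simpa only [oddCentralSeries, map_neg, coeff_mk] using h

theorem oddCentralSeries_add_one_sub_sub_one (y : R) :
    oddCentralSeries (y + 1) - oddCentralSeries (y - 1) = evenCentralSeries y := by
  ext m
  have h₁ := Ring.choose_succ_succ (y + m) (2 * m)
  have h₂ := Ring.choose_succ_succ (y - 1 + m) (2 * m)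
  rw [show y + m + 1 = y + 1 + m by ring] at h₁
  rw [show y - 1 + m + 1 = y + m by ring] at h₂
  simp only [oddCentralSeries, evenCentralSeries, map_sub, coeff_mk]
  linear_combination h₁ + h₂

theorem oddCentralSeries_add_one (x : R) :
    oddCentralSeries (x + 1) = (2 + X) * oddCentralSeries x - oddCentralSeries (x - 1) := by
  rw [add_mul, two_mul]
  ext m
  cases m with
  | zero =>
    simp [oddCentralSeries]
  | succ m =>
    have h₁ := Ring.choose_succ_succ (x + m + 1) (2 * m + 2)
    have h₂ := Ring.choose_succ_succ (x + m) (2 * m + 2)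
    have h₃ := Ring.choose_succ_succ (x + m) (2 * m + 1)
    simp only [oddCentralSeries, map_sub, map_add, coeff_succ_X_mul, coeff_mk, Nat.cast_add_one]
    rw [show x + 1 + (m + 1 : R) = x + m + 1 + 1 by ring, show x + (m + 1 : R) = x + m + 1 by ring,
      show x - 1 + (m + 1 : R) = x + m by ring, show 2 * (m + 1) + 1 = 2 * m + 2 + 1 by ring]
    linear_combination h₁ - h₂ + h₃

theorem oddCentralSeries_natCast_add_add_natCast_sub (k : ℕ) (y : R) :
    oddCentralSeries (k + y) + oddCentralSeries (k - y) =
      oddCentralSeries (k : R) * evenCentralSeries y := by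
  induction k using Nat.twoStepInduction with
  | zero =>
    rw [Nat.cast_zero, zero_add, zero_sub, oddCentralSeries_neg, oddCentralSeries_zero, zero_mul,
      add_neg_cancel]
  | one =>
    rw [Nat.cast_one, oddCentralSeries_one, one_mul, ← neg_sub y 1, oddCentralSeries_neg,
      add_comm 1 y, ← sub_eq_add_neg, oddCentralSeries_add_one_sub_sub_one]
  | more k ih₀ ih₁ =>
    have h := oddCentralSeries_add_one (k + 1 : R)
    have h_add := oddCentralSeries_add_one (k + 1 + y)
    have h_sub := oddCentralSeries_add_one (k + 1 - y)
    rw [add_sub_cancel_right] at h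
    rw [show (k + 1 + y + 1 : R) = k + 1 + 1 + y by ring,
      show k + 1 + y - 1 = k + y by ring] at h_add
    rw [show (k + 1 - y + 1 : R) = k + 1 + 1 - y by ring,
      show k + 1 - y - 1 = k - y by ring] at h_sub
    rw [show ((k + 2 : ℕ) : R) = k + 1 + 1 by push_cast; ring]
    rw [Nat.cast_add_one] at ih₁
    linear_combination h_add + h_sub - evenCentralSeries y * h + (2 + X) * ih₁ - ih₀

theorem coeff_oddCentralSeries_add_mem_binomialFunctions (a : R) (n : ℕ) :
    (fun x => coeff n (oddCentralSeries (x + a))) ∈ binomialFunctions R := by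
  simpa only [oddCentralSeries, coeff_mk, add_assoc] using
    choose_add_mem_binomialFunctions (a + n) (2 * n + 1)

theorem coeff_oddCentralSeries_mul_mem_binomialFunctions (p : R⟦X⟧) (n : ℕ) :
    (fun x => coeff n (oddCentralSeries x * p)) ∈ binomialFunctions R := by
  have h : (fun x => coeff n (oddCentralSeries x * p)) =
      ∑ ij ∈ antidiagonal n, coeff ij.2 p • fun x => coeff ij.1 (oddCentralSeries x) := by
    ext x
    simp only [coeff_mul, Finset.sum_apply, Pi.smul_apply, smul_eq_mul, mul_comm (coeff _ p)]
  rw [h]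
  refine Submodule.sum_mem _ fun ij _ => Submodule.smul_mem _ _ ?_
  simpa only [add_zero] using coeff_oddCentralSeries_add_mem_binomialFunctions (0 : R) ij.1

theorem oddCentralSeries_add_add_sub (x y : R) :
    oddCentralSeries (x + y) + oddCentralSeries (x - y) =
      oddCentralSeries x * evenCentralSeries y := by
  ext n
  have hl := Submodule.add_mem _ (coeff_oddCentralSeries_add_mem_binomialFunctions y n)
    (coeff_oddCentralSeries_add_mem_binomialFunctions (-y) n)
  have hr := coeff_oddCentralSeries_mul_mem_binomialFunctions (evenCentralSeries y) n
  have h := congrFun (eq_of_natCast_eq_of_mem_binomialFunctions hl hr fun k => by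
    simp only [Pi.add_apply, ← sub_eq_add_neg, ← map_add,
      oddCentralSeries_natCast_add_add_natCast_sub]) x
  simpa only [Pi.add_apply, ← sub_eq_add_neg, ← map_add] using h

end CentralSeries

theorem stmt_5_general {R : Type*} [CommRing R] [BinomialRing R] (n : ℕ) (x y : R) :
    Ring.choose (x + y + n) (2 * n + 1) + Ring.choose (x - y + n) (2 * n + 1) =
      ∑ m ∈ Finset.range (n + 1),
        Ring.choose (x + m) (2 * m + 1) *
          (Ring.choose (y + (n - m : ℕ)) (2 * (n - m)) +
            Ring.choose (y - 1 + (n - m : ℕ)) (2 * (n - m))) := by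
  have h := congrArg (coeff n) (oddCentralSeries_add_add_sub x y)
  rw [coeff_mul, Nat.sum_antidiagonal_eq_sum_range_succ_mk] at h
  simpa only [oddCentralSeries, evenCentralSeries, map_add, coeff_mk] using h

theorem stmt_5 (n : ℕ) (x y : ℚ) :
    Ring.choose (x + y + n) (2 * n + 1) + Ring.choose (x - y + n) (2 * n + 1) =
      ∑ m ∈ Finset.range (n + 1),
        Ring.choose (x + m) (2 * m + 1) *
          (Ring.choose (y + (n - m : ℕ)) (2 * (n - m)) +
            Ring.choose (y - 1 + (n - m : ℕ)) (2 * (n - m))) :=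
  stmt_5_general n x y
end

section
/- For every nonnegative integer n and all rational numbers x and y, one has Σ_{m=0}^{n} B(x−m, m) · B(y+m, n−m) = S_n(x+y), where S_n(t) := Σ_{m=0}^{n} B(t−m, m) · C(m, n−m), B(t,k) is the generalized binomial coefficient t(t−1)⋯(t−k+1)/k!, and C(a,b) is the ordinary binomial coefficient of nonnegative integers. -/
/-- `S n t = ∑_{m=0}^{n} B(t - m, m) * C(m, n - m)` for `n ≥ 0`, and `0` for `n < 0`. -/
noncomputable def S (n : ℤ) (t : ℚ) : ℚ :=
  if 0 ≤ n then
    ∑ m ∈ Finset.range (n.toNat + 1), Ring.choose (t - m) m * (m.choose (n.toNat - m) : ℚ)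
  else 0

/-!
In terms of the formal power series `P x = ∑ₘ B(x - m, m) wᵐ` with `w = z(1 + z)`, the sum on the
left of the identity is the coefficient of `zⁿ` in `(1 + z)ʸ P x`. Pascal's rule gives
`P (x + 1) = P x + w P (x - 1)`, so `D x = P (x + 1) - (1 + z) P x` satisfies `D x = -z D (x - 1)`;
hence every power of `z` divides `D x`, and `P (x + 1) = (1 + z) P x`. To pass from integer to
arbitrary shifts, expand `B(x + y - m, m)` by Vandermonde's identity:
`P (x + y) = ∑ⱼ B(y, j) wʲ P (x - j) = ∑ⱼ B(y, j) zʲ P x = (1 + z)ʸ P x`.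
-/

open Finset

theorem sum_antidiagonal_assoc {A M : Type*} [AddMonoid A] [HasAntidiagonal A] [AddCommMonoid M]
    (f : A → A → A → M) (n : A) :
    ∑ p ∈ antidiagonal n, ∑ q ∈ antidiagonal p.1, f q.1 q.2 p.2 =
      ∑ p ∈ antidiagonal n, ∑ q ∈ antidiagonal p.2, f p.1 q.1 q.2 := by
  simp only [sum_sigma']
  refine sum_nbij' (fun ⟨⟨_, c⟩, ⟨a, b⟩⟩ ↦ ⟨(a, b + c), (b, c)⟩)
    (fun ⟨⟨a, _⟩, ⟨b, c⟩⟩ ↦ ⟨(a + b, c), (a, b)⟩) ?_ ?_ ?_ ?_ ?_ <;>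
  · rintro ⟨⟨_, _⟩, ⟨_, _⟩⟩ h
    simp only [mem_sigma, HasAntidiagonal.mem_antidiagonal] at h
    obtain ⟨rfl, rfl⟩ := h
    simp [add_assoc]

section BinomialRing

variable {R : Type*} [CommRing R] [BinomialRing R]

/-- The convolution `∑_{m + k = n} B(x - m, m) B(y + m, k)` over a binomial ring. -/
noncomputable def chooseConv (n : ℕ) (x y : R) : R :=
  ∑ p ∈ antidiagonal n, Ring.choose (x - p.1) p.1 * Ring.choose (y + p.1) p.2

theorem chooseConv_zero (x y : R) : chooseConv 0 x y = 1 := by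
  simp [chooseConv]

theorem chooseConv_succ_add_one_right (n : ℕ) (x y : R) :
    chooseConv (n + 1) x (y + 1) = chooseConv (n + 1) x y + chooseConv n x y := by
  simp only [chooseConv, Nat.sum_antidiagonal_succ', Ring.choose_zero_right, add_right_comm y 1,
    Ring.choose_succ_succ, mul_add, sum_add_distrib]
  ring

theorem chooseConv_succ_add_one_left (n : ℕ) (x y : R) :
    chooseConv (n + 1) (x + 1) y = chooseConv (n + 1) x y + chooseConv n (x - 1) (y + 1) := by
  have shift_left (m : ℕ) : x + 1 - (m + 1 : ℕ) = x - 1 - m + 1 := by push_cast; ring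
  have shift_left' (m : ℕ) : x - (m + 1 : ℕ) = x - 1 - m := by push_cast; ring
  have shift_right (m : ℕ) : y + (m + 1 : ℕ) = y + 1 + m := by push_cast; ring
  simp only [chooseConv, Nat.sum_antidiagonal_succ, Ring.choose_zero_right, shift_left, shift_left',
    shift_right, Ring.choose_succ_succ, add_mul, sum_add_distrib]
  ring

theorem chooseConv_add_one_comm (n : ℕ) (x y : R) :
    chooseConv n (x + 1) y = chooseConv n x (y + 1) := by
  induction n generalizing x y with
  | zero => simp only [chooseConv_zero]
  | succ n ih =>
    rw [chooseConv_succ_add_one_right, chooseConv_succ_add_one_left, ← ih, sub_add_cancel]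

theorem chooseConv_sub_natCast_add_natCast (n k : ℕ) (x y : R) :
    chooseConv n (x - k) (y + k) = chooseConv n x y := by
  induction k with
  | zero => simp only [Nat.cast_zero, sub_zero, add_zero]
  | succ k ih =>
    rw [← ih, Nat.cast_succ, ← add_assoc, ← chooseConv_add_one_comm, ← sub_sub, sub_add_cancel]

theorem chooseConv_add_right (n : ℕ) (x y z : R) :
    chooseConv n x (y + z) =
      ∑ p ∈ antidiagonal n, chooseConv p.1 x y * Ring.choose z p.2 := by
  simp only [chooseConv, add_right_comm y z, Ring.add_choose_eq _ (Commute.all _ z), mul_sum,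
    sum_mul, ← mul_assoc]
  exact (sum_antidiagonal_assoc (fun m k j : ℕ ↦
    Ring.choose (x - m) m * Ring.choose (y + m) k * Ring.choose z j) n).symm

theorem chooseConv_add_left (n : ℕ) (x y z : R) :
    chooseConv n (x + y) z =
      ∑ p ∈ antidiagonal n, Ring.choose x p.1 * chooseConv p.2 (y - p.1) (z + p.1) := by
  have choose_add_sub (m : ℕ) : Ring.choose (x + y - m) m =
      ∑ q ∈ antidiagonal m, Ring.choose x q.1 * Ring.choose (y - q.1 - q.2) q.2 := by
    rw [add_sub_assoc, Ring.add_choose_eq m (Commute.all _ _)]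
    refine sum_congr rfl fun q hq ↦ ?_
    rw [← HasAntidiagonal.mem_antidiagonal.mp hq, Nat.cast_add, sub_sub]
  calc chooseConv n (x + y) z
    _ = ∑ p ∈ antidiagonal n, ∑ q ∈ antidiagonal p.1, Ring.choose x q.1 *
          (Ring.choose (y - q.1 - q.2) q.2 * Ring.choose (z + q.1 + q.2) p.2) := by
      simp only [chooseConv, choose_add_sub, sum_mul, mul_assoc]
      refine sum_congr rfl fun p _ ↦ sum_congr rfl fun q hq ↦ ?_
      rw [← HasAntidiagonal.mem_antidiagonal.mp hq, Nat.cast_add, add_assoc]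
    _ = _ := by
      simp only [chooseConv, mul_sum]
      exact sum_antidiagonal_assoc (fun j m k : ℕ ↦ Ring.choose x j *
        (Ring.choose (y - j - m) m * Ring.choose (z + j + m) k)) n

theorem chooseConv_add_comm (n : ℕ) (x y z : R) :
    chooseConv n (x + y) z = chooseConv n x (z + y) := by
  rw [add_comm x, chooseConv_add_left, chooseConv_add_right, ← Nat.sum_antidiagonal_swap]
  simp only [chooseConv_sub_natCast_add_natCast, Prod.fst_swap, Prod.snd_swap, mul_comm]

theorem chooseConv_eq_sum_range (n : ℕ) (x y : R) :
    chooseConv n x y =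
      ∑ m ∈ range (n + 1), Ring.choose (x - m) m * Ring.choose (y + m) (n - m) :=
  Nat.sum_antidiagonal_eq_sum_range_succ
    (fun m k ↦ Ring.choose (x - m) m * Ring.choose (y + m) k) n

theorem stmt_6_general (n : ℕ) (x y : R) :
    ∑ m ∈ range (n + 1), Ring.choose (x - m) m * Ring.choose (y + m) (n - m) =
      ∑ m ∈ range (n + 1), Ring.choose (x + y - m) m * (m.choose (n - m) : R) := by
  rw [← chooseConv_eq_sum_range, ← zero_add y, ← chooseConv_add_comm, chooseConv_eq_sum_range]
  simp only [zero_add, Ring.choose_natCast]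

end BinomialRing

theorem stmt_6 (n : ℕ) (x y : ℚ) :
    ∑ m ∈ Finset.range (n + 1), Ring.choose (x - m) m * Ring.choose (y + m) (n - m) =
      S n (x + y) := by
  rw [stmt_6_general, S, if_pos n.cast_nonneg, Int.toNat_natCast]
end

section
/- For every nonnegative integer n and every rational number x, one has B(x, n) = S_n(x) + S_{n−1}(x−1), where S_n(t) := Σ_{m=0}^{n} B(t−m, m) · C(m, n−m) for n ≥ 0 and S_n(t) := 0 for n < 0, B(t,k) is the generalized binomial coefficient t(t−1)⋯(t−k+1)/k!, and C(a,b) is the ordinary binomial coefficient of nonnegative integers. -/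
/-!
The Fibonacci polynomials `F_N(w) = ∑_{i + j = N} C(i, j) w ^ j` satisfy
`F_{N+2} = F_{N+1} + w F_N`. For `w = z (1 + z)` this recurrence makes `F_{N+1} + z F_N` a geometric
sequence of ratio `1 + z`, so `F_{N+1} + z F_N = (1 + z) ^ (N + 1)`. Comparing the coefficients of
`z ^ n` gives the identity at `x = N + 1` as soon as `n ≤ N + 1`. For fixed `n` both sides are,
up to a common denominator, integer polynomials in `x`, so they agree everywhere.
-/

open Finset Polynomial

section FibonacciPolynomials

variable {R : Type*} [CommSemiring R]

/-- The Fibonacci polynomial `∑_{i + j = N} C(i, j) w ^ j`, evaluated at `w`. At `w = 1` it is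
`Nat.fib (N + 1)`. -/
def fibSum (w : R) (N : ℕ) : R :=
  ∑ p ∈ antidiagonal N, (p.1.choose p.2 : R) * w ^ p.2

theorem fibSum_add_two (w : R) (N : ℕ) :
    fibSum w (N + 2) = fibSum w (N + 1) + w * fibSum w N := by
  have pascal (i j : ℕ) : ((i + 1).choose (j + 1) : R) * w ^ (j + 1) =
      w * (i.choose j * w ^ j) + i.choose (j + 1) * w ^ (j + 1) := by
    rw [Nat.choose_succ_succ]; push_cast; ring
  simp only [fibSum, Nat.antidiagonal_succ_succ', Nat.antidiagonal_succ']
  simp [pascal, sum_add_distrib, mul_sum, add_left_comm, add_comm]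

theorem fibSum_succ_add_mul_fibSum (z : R) (N : ℕ) :
    fibSum (z * (1 + z)) (N + 1) + z * fibSum (z * (1 + z)) N = (1 + z) ^ (N + 1) := by
  induction N with
  | zero => simp [fibSum, Nat.antidiagonal_succ]
  | succ N ih =>
    calc
      _ = (1 + z) * (fibSum (z * (1 + z)) (N + 1) + z * fibSum (z * (1 + z)) N) := by
        rw [fibSum_add_two]; ring
      _ = (1 + z) ^ (N + 2) := by rw [ih, ← pow_succ']

theorem coeff_X_mul_one_add_X_pow (m n : ℕ) :
    ((X * (1 + X) : R[X]) ^ m).coeff n = if m ≤ n then (m.choose (n - m) : R) else 0 := by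
  rw [mul_pow, coeff_X_pow_mul', coeff_one_add_X_pow]

theorem coeff_fibSum_X_mul_one_add_X {n N : ℕ} (h : n ≤ N) :
    (fibSum (X * (1 + X) : R[X]) N).coeff n =
      ∑ m ∈ range (n + 1), ((N - m).choose m * m.choose (n - m) : R) := by
  have hcoeff (m : ℕ) : (((N - m).choose m : R[X]) * (X * (1 + X)) ^ m).coeff n =
      if m ≤ n then ((N - m).choose m * m.choose (n - m) : R) else 0 := by
    rw [coeff_natCast_mul, coeff_X_mul_one_add_X_pow, mul_ite, mul_zero]
  rw [fibSum, ← Nat.sum_antidiagonal_swap, Nat.sum_antidiagonal_eq_sum_range_succ_mk,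
    finsetSum_coeff]
  simp only [Prod.swap, hcoeff]
  rw [← sum_subset (range_subset_range.2 (Nat.succ_le_succ h)) fun m _ hm =>
    if_neg (mt mem_range_succ_iff.2 hm)]
  exact sum_congr rfl fun m hm => if_pos (mem_range_succ_iff.1 hm)

end FibonacciPolynomials

theorem choose_succ_eq_sum_choose_mul_choose {n N : ℕ} (h : n ≤ N + 1) :
    (N + 1).choose n =
      ∑ m ∈ range (n + 1), (N + 1 - m).choose m * m.choose (n - m) +
        ∑ m ∈ range n, (N - m).choose m * m.choose (n - 1 - m) := by
  have hcoeff := congrArg (coeff · n) (fibSum_succ_add_mul_fibSum (X : ℕ[X]) N)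
  cases n with
  | zero => simp
  | succ n =>
    have hn : n ≤ N := Nat.succ_le_succ_iff.1 h
    simpa [coeff_fibSum_X_mul_one_add_X, hn, coeff_one_add_X_pow, eq_comm] using hcoeff

section ChooseCombinations

variable {R : Type*} [Ring R] [BinomialRing R]

/-- The value at `t` of the formal combination `P` of the functions `t ↦ B(t - a, k)`, where
`P (a, k)` is the coefficient. Keeping `P` formal allows it to be evaluated both in `ℤ` and in
`R`. -/
noncomputable def chooseComb (t : R) : (ℕ × ℕ →₀ ℤ) →ₗ[ℤ] R :=
  Finsupp.linearCombination ℤ fun p => Ring.choose (t - p.1) p.2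

@[simp]
theorem chooseComb_single (t : R) (a k : ℕ) (c : ℤ) :
    chooseComb t (Finsupp.single (a, k) c) = c • Ring.choose (t - a) k :=
  Finsupp.linearCombination_single ..

theorem factorial_nsmul_choose_sub (t : R) (a k : ℕ) :
    k.factorial • Ring.choose (t - a) k = aeval t ((descPochhammer ℤ k).comp (X - C (a : ℤ))) := by
  rw [← Ring.descPochhammer_eq_factorial_smul_choose, ← aeval_eq_smeval, aeval_comp]
  simp

/-- A common multiple of the denominators `k!` of the binomials occurring in `P`. -/
def chooseDenom (P : ℕ × ℕ →₀ ℤ) : ℕ := ∏ p ∈ P.support, p.2.factorial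

/-- The integer polynomial `chooseDenom P * ∑ P (a, k) B(X - a, k)`. -/
noncomputable def chooseNumer (P : ℕ × ℕ →₀ ℤ) : ℤ[X] :=
  P.sum fun p c => (c * (chooseDenom P / p.2.factorial : ℕ)) •
    (descPochhammer ℤ p.2).comp (X - C (p.1 : ℤ))

theorem aeval_chooseNumer (P : ℕ × ℕ →₀ ℤ) (t : R) :
    aeval t (chooseNumer P) = chooseDenom P • chooseComb t P := by
  rw [chooseNumer, chooseComb, Finsupp.linearCombination_apply, Finsupp.sum, Finsupp.sum, map_sum,
    smul_sum]
  refine sum_congr rfl fun p hp => ?_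
  have hdvd : p.2.factorial ∣ chooseDenom P :=
    dvd_prod_of_mem (fun p : ℕ × ℕ => p.2.factorial) hp
  rw [map_zsmul, ← factorial_nsmul_choose_sub, mul_smul, natCast_zsmul, smul_smul,
    Nat.div_mul_cancel hdvd, smul_comm]

theorem chooseComb_eq_zero_of_infinite {P : ℕ × ℕ →₀ ℤ}
    (h : {N : ℕ | chooseComb (N : ℤ) P = 0}.Infinite) (t : R) : chooseComb t P = 0 := by
  have hnumer : chooseNumer P = 0 := by
    refine eq_zero_of_infinite_isRoot _
      ((h.image Nat.cast_injective.injOn).mono (Set.image_subset_iff.2 fun N hN => ?_))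
    have hN : chooseComb (N : ℤ) P = 0 := hN
    simp [IsRoot, ← coe_aeval_eq_eval, aeval_chooseNumer, hN]
  have hdenom : chooseDenom P ≠ 0 := prod_ne_zero_iff.2 fun p _ => p.2.factorial_ne_zero
  have := BinomialRing.toIsAddTorsionFree (R := R)
  rw [← smul_eq_zero_iff_right hdenom, ← aeval_chooseNumer, hnumer, map_zero]

end ChooseCombinations

section Identity

/-- The formal difference of the two sides of the identity at `n`. -/
noncomputable def chooseDefect (n : ℕ) : ℕ × ℕ →₀ ℤ :=
  Finsupp.single (0, n) 1 -
    (∑ m ∈ range (n + 1), Finsupp.single (m, m) (m.choose (n - m) : ℤ) +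
      ∑ m ∈ range n, Finsupp.single (m + 1, m) (m.choose (n - 1 - m) : ℤ))

variable {R : Type*} [Ring R] [BinomialRing R]

theorem chooseComb_chooseDefect (n : ℕ) (t : R) :
    chooseComb t (chooseDefect n) = Ring.choose t n -
      (∑ m ∈ range (n + 1), Ring.choose (t - m) m * (m.choose (n - m) : R) +
        ∑ m ∈ range n, Ring.choose (t - 1 - m) m * (m.choose (n - 1 - m) : R)) := by
  simp only [chooseDefect, map_sub, map_add, map_sum, chooseComb_single, one_smul,
    Nat.cast_zero, sub_zero, natCast_zsmul, nsmul_eq_mul', Nat.cast_succ, sub_sub, add_comm]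

theorem choose_natCast_sub {N m : ℕ} (h : m ≤ N) (k : ℕ) :
    Ring.choose (N - m : R) k = (N - m).choose k := by
  rw [← Nat.cast_sub h, Ring.choose_natCast]

theorem chooseComb_natCast_succ_chooseDefect {n N : ℕ} (h : n ≤ N + 1) :
    chooseComb ((N + 1 : ℕ) : R) (chooseDefect n) = 0 := by
  have hleft (m : ℕ) (hm : m ∈ range (n + 1)) :
      Ring.choose (((N + 1 : ℕ) : R) - m) m = (N + 1 - m).choose m :=
    choose_natCast_sub ((mem_range_succ_iff.1 hm).trans h) m
  have hright (m : ℕ) (hm : m ∈ range n) :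
      Ring.choose (((N + 1 : ℕ) : R) - 1 - m) m = (N - m).choose m := by
    rw [Nat.cast_succ, add_sub_cancel_right, choose_natCast_sub (by grind)]
  rw [chooseComb_chooseDefect, sub_eq_zero, Ring.choose_natCast,
    choose_succ_eq_sum_choose_mul_choose h,
    sum_congr rfl fun m hm => congrArg (· * _) (hleft m hm),
    sum_congr rfl fun m hm => congrArg (· * _) (hright m hm)]
  simp

theorem stmt_7_general (n : ℕ) (x : R) :
    Ring.choose x n =
      ∑ m ∈ range (n + 1), Ring.choose (x - m) m * (m.choose (n - m) : R) +
        ∑ m ∈ range n, Ring.choose (x - 1 - m) m * (m.choose (n - 1 - m) : R) := by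
  rw [← sub_eq_zero, ← chooseComb_chooseDefect]
  refine chooseComb_eq_zero_of_infinite
    (((Set.Ici_infinite n).image Nat.succ_injective.injOn).mono ?_) x
  rintro _ ⟨N, hN, rfl⟩
  exact chooseComb_natCast_succ_chooseDefect (Nat.le_succ_of_le hN)

end Identity

theorem S_natCast (n : ℕ) (t : ℚ) :
    S n t = ∑ m ∈ range (n + 1), Ring.choose (t - m) m * (m.choose (n - m) : ℚ) := by
  simp [S]

theorem S_natCast_sub_one (n : ℕ) (t : ℚ) :
    S ((n : ℤ) - 1) t = ∑ m ∈ range n, Ring.choose (t - m) m * (m.choose (n - 1 - m) : ℚ) := by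
  cases n with
  | zero => simp [S]
  | succ n => rw [Nat.cast_succ, add_sub_cancel_right, S_natCast, Nat.add_sub_cancel]

theorem stmt_7 (n : ℕ) (x : ℚ) :
    Ring.choose x n = S n x + S ((n : ℤ) - 1) (x - 1) := by
  rw [S_natCast, S_natCast_sub_one]
  exact stmt_7_general n x
end

section
/- For every nonnegative integer n and all rational numbers x and y, one has Σ_{m=0}^{n} B(x+1−m, m) · B(y+m, n−m) = Σ_{m=0}^{n} B(x−m, m) · B(y+1+m, n−m), where B(t,k) denotes the generalized binomial coefficient t(t−1)⋯(t−k+1)/k!. -/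
/-!
Pascal's rule, applied to either factor of the convolution
`S n x y = ∑ i + j = n, B(x - a i, i) B(y + a i, j)`, gives

* `S (n + 1) (x + 1) y = S (n + 1) x y + S n (x - a) (y + a)`,
* `S (n + 1) x (y + 1) = S (n + 1) x y + S n x y`.

For an integer `a`, if `S n` is unchanged when a unit moves from one argument to the other, then
it is unchanged when `a` moves, so the last two summands agree and `S (n + 1)` is
unchanged as well.
-/

section JensenSum

open Finset.HasAntidiagonal

variable {R : Type*} [NonAssocRing R] [Pow R ℕ] [BinomialRing R]

/-- The convolution of generalized binomial coefficients on the left of Jensen's identity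
`∑ k, B(x + z k, k) B(y - z k, n - k) = ∑ k, B(x + y - k, n - k) z ^ k`, with `a = -z`.
Summing over the antidiagonal avoids the truncated subtraction `n - k`. -/
def jensenSum (a : R) (n : ℕ) (x y : R) : R :=
  ∑ p ∈ antidiagonal n, Ring.choose (x - a * p.1) p.1 * Ring.choose (y + a * p.1) p.2

theorem jensenSum_eq_sum_range (a : R) (n : ℕ) (x y : R) :
    jensenSum a n x y = ∑ m ∈ Finset.range (n + 1),
      Ring.choose (x - a * m) m * Ring.choose (y + a * m) (n - m) :=
  Finset.Nat.sum_antidiagonal_eq_sum_range_succ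
    (fun i j => Ring.choose (x - a * i) i * Ring.choose (y + a * i) j) n

variable [NatPowAssoc R]

theorem jensenSum_zero (a x y : R) : jensenSum a 0 x y = 1 := by
  simp [jensenSum]

theorem jensenSum_succ_add_one_left (a : R) (n : ℕ) (x y : R) :
    jensenSum a (n + 1) (x + 1) y = jensenSum a (n + 1) x y + jensenSum a n (x - a) (y + a) := by
  have mul_cast_succ (i : ℕ) : a * (i + 1 : ℕ) = a + a * i := by
    rw [Nat.cast_add_one, mul_add, mul_one, add_comm]
  have pascal (i : ℕ) : Ring.choose (x + 1 - a * (i + 1 : ℕ)) (i + 1) =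
      Ring.choose (x - a * (i + 1 : ℕ)) (i + 1) + Ring.choose (x - a - a * i) i := by
    rw [add_sub_right_comm, Ring.choose_succ_succ, add_comm, mul_cast_succ, sub_add_eq_sub_sub]
  have shift (i : ℕ) : y + a * (i + 1 : ℕ) = y + a + a * i := by
    rw [mul_cast_succ, add_assoc]
  simp only [jensenSum, Finset.Nat.sum_antidiagonal_succ, pascal, shift, add_mul,
    Finset.sum_add_distrib, Ring.choose_zero_right]
  rw [add_assoc]

theorem jensenSum_succ_add_one_right (a : R) (n : ℕ) (x y : R) :
    jensenSum a (n + 1) x (y + 1) = jensenSum a (n + 1) x y + jensenSum a n x y := by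
  have pascal (i j : ℕ) : Ring.choose (y + 1 + a * i) (j + 1) =
      Ring.choose (y + a * i) (j + 1) + Ring.choose (y + a * i) j := by
    rw [add_right_comm, Ring.choose_succ_succ, add_comm]
  simp only [jensenSum, Finset.Nat.sum_antidiagonal_succ', pascal, mul_add,
    Finset.sum_add_distrib, Ring.choose_zero_right]
  rw [add_assoc]

theorem jensenSum_add_one_left (a : ℤ) (n : ℕ) (x y : R) :
    jensenSum (a : R) n (x + 1) y = jensenSum (a : R) n x (y + 1) := by
  induction n generalizing x y with
  | zero => rw [jensenSum_zero, jensenSum_zero]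
  | succ n ih =>
    have periodic : Function.Periodic (fun t => jensenSum (a : R) n (x - t) (y + t)) 1 := by
      intro t
      simpa only [← sub_sub, sub_add_cancel, ← add_assoc] using (ih (x - t - 1) (y + t)).symm
    have shift_by_a : jensenSum (a : R) n (x - a) (y + a) = jensenSum (a : R) n x y := by
      simpa only [zsmul_one, sub_zero, add_zero] using periodic.zsmul_eq a
    rw [jensenSum_succ_add_one_left, jensenSum_succ_add_one_right, shift_by_a]

theorem stmt_15_general (a : ℤ) (n : ℕ) (x y : R) :
    ∑ m ∈ Finset.range (n + 1),
        Ring.choose (x + 1 - a * m) m * Ring.choose (y + a * m) (n - m) =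
      ∑ m ∈ Finset.range (n + 1),
        Ring.choose (x - a * m) m * Ring.choose (y + 1 + a * m) (n - m) := by
  simpa only [jensenSum_eq_sum_range] using jensenSum_add_one_left a n x y

end JensenSum

theorem stmt_15 (n : ℕ) (x y : ℚ) :
    ∑ m ∈ Finset.range (n + 1), Ring.choose (x + 1 - m) m * Ring.choose (y + m) (n - m) =
      ∑ m ∈ Finset.range (n + 1), Ring.choose (x - m) m * Ring.choose (y + 1 + m) (n - m) := by
  simpa only [Int.cast_one, one_mul] using stmt_15_general 1 n x y
end
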